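/- arXiv:1902.01321 — 9 statements merged into one kernel-verified Lean document; each statement's English description precedes it below -/
import Mathlib

section
/- There exists a price π* in the finite set V = {v_0, v_1, …, v_A} such that G(π*) ≥ G(π) for every real π ≥ 0; that is, the spot-market revenue G attains its supremum over [0, ∞) at a point of V. (Consequently the optimal spot price can be found by evaluating G at the finitely many points of V and taking a maximizer.) -/
/-!
Every price `π ≥ 0` is dominated by some `v i`. If some bid is at least `π`, raising `π` to the
lowest bid that is at least `π` leaves the set of bids at or above the price unchanged, so the
revenue is the same nonnegative coefficient times a larger price. If no bid is at least `π`, the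
revenue is `0`, which is also the revenue at `v 0`. A maximizer of `G` over the finite set of the
`v i` is therefore a global maximizer.
-/

/-- Spot-market pricing at a single slot: the revenue function `G` attains its
supremum over `[0, ∞)` at one of the finitely many prices `v 0, v 1, …, v A`
(where `v 0 = v 1 + 1`). -/
theorem spot_revenue_max_attained_on_bid_prices
    (A M : ℕ) (hA : 1 ≤ A)
    (v : ℕ → ℝ)
    (hmono : ∀ i j, 1 ≤ i → i ≤ j → j ≤ A → v j ≤ v i)
    (hnonneg : ∀ i, 1 ≤ i → i ≤ A → 0 ≤ v i)
    (hv0 : v 0 = v 1 + 1)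
    (L β : ℝ) (hL : 0 < L) (hβ0 : 0 < β) (hβ1 : β < 1)
    (φ : ℕ → ℕ) (hφ : ∀ n, φ n ≤ n)
    (N : ℝ → ℕ)
    (hN : ∀ π : ℝ, N π = min M ((Finset.Icc 1 A).filter (fun i => π ≤ v i)).card)
    (G : ℝ → ℝ)
    (hG : ∀ π : ℝ, G π = ((N π : ℝ) - β * (φ (N π) : ℝ)) * π / L) :
    ∃ i ≤ A, ∀ π : ℝ, 0 ≤ π → G π ≤ G (v i) := by
  have hdom : ∀ π : ℝ, 0 ≤ π → ∃ i ∈ Finset.range (A + 1), G π ≤ G (v i) := by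
    intro π _
    rcases ((Finset.Icc 1 A).filter (fun i => π ≤ v i)).eq_empty_or_nonempty with hS | hS
    · refine ⟨0, by simp, ?_⟩
      have hφ0 : φ 0 = 0 := Nat.le_zero.mp (hφ 0)
      have hN1 : N π = 0 := by rw [hN, hS]; simp
      have hN0 : N (v 0) = 0 := by
        have he : (Finset.Icc 1 A).filter (fun i => v 0 ≤ v i) = ∅ := by
          refine Finset.filter_eq_empty_iff.mpr fun i hi => ?_
          rw [Finset.mem_Icc] at hi
          have := hmono 1 i le_rfl hi.1 hi.2
          linarith
        rw [hN, he]; simp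
      rw [hG, hG, hN1, hN0, hφ0]; simp
    · obtain ⟨i, hi, hmin⟩ := Finset.exists_min_image _ v hS
      rw [Finset.mem_filter, Finset.mem_Icc] at hi
      refine ⟨i, Finset.mem_range.mpr (by omega), ?_⟩
      have hNi : N (v i) = N π := by
        rw [hN, hN]
        congr 2
        refine Finset.filter_congr fun j hj => ⟨fun h => hi.2.trans h, fun h => ?_⟩
        exact hmin j (Finset.mem_filter.mpr ⟨hj, h⟩)
      have hcoef : 0 ≤ (N π : ℝ) - β * (φ (N π) : ℝ) := by
        have h1 : (φ (N π) : ℝ) ≤ N π := by exact_mod_cast hφ (N π)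
        have h2 : β * (φ (N π) : ℝ) ≤ φ (N π) :=
          mul_le_of_le_one_left (Nat.cast_nonneg _) hβ1.le
        linarith
      rw [hG, hG, hNi]
      exact div_le_div_of_nonneg_right (mul_le_mul_of_nonneg_left hi.2 hcoef) hL.le
  obtain ⟨k, hk, hmax⟩ := Finset.exists_max_image (Finset.range (A + 1)) (fun i => G (v i))
    ⟨0, by simp⟩
  refine ⟨k, Nat.lt_succ_iff.mp (Finset.mem_range.mp hk), fun π hπ => ?_⟩
  obtain ⟨i, hi, hle⟩ := hdom π hπ
  exact hle.trans (hmax i hi)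
end

section
/- If π* ≥ 0 maximizes the revenue G over [0, ∞) (i.e., G(π*) ≥ G(π) for all π ≥ 0) and the number of accepted bids N* = N(π*) is at least 1, then the optimal spot price equals the N*-th highest bid price: π* = v_{N*}. -/
/-!
Write `n = N π*`. Since at least `n` bids are at or above `π*` and the bids are sorted,
`π* ≤ v n`. Raising the price from `π*` to `v n` leaves the number of accepted bids equal
to `n`: it cannot grow because acceptance is antitone in the price, and it cannot drop
because the bids `1, …, n` are all at or above `v n` and `n ≤ M`. With the number of accepted
bids fixed at `n`, revenue is the price times `(n - β φ(n)) / L`, which is positive as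
`φ(n) ≤ n`, `β < 1` and `n ≥ 1`. Optimality of `π*` therefore forces `v n ≤ π*`.
-/

/-- If `π*` maximizes the spot revenue `G` over `[0, ∞)` and the number of
accepted bids `N* = N π*` is at least 1, then `π* = v N*`, the `N*`-th highest
bid price. -/
theorem spot_optimal_price_eq_marginal_bid
    (A M : ℕ) (hA : 1 ≤ A)
    (v : ℕ → ℝ)
    (hmono : ∀ i j, 1 ≤ i → i ≤ j → j ≤ A → v j ≤ v i)
    (hnonneg : ∀ i, 1 ≤ i → i ≤ A → 0 ≤ v i)
    (hv0 : v 0 = v 1 + 1)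
    (L β : ℝ) (hL : 0 < L) (hβ0 : 0 < β) (hβ1 : β < 1)
    (φ : ℕ → ℕ) (hφ : ∀ n, φ n ≤ n)
    (N : ℝ → ℕ)
    (hN : ∀ π : ℝ, N π = min M ((Finset.Icc 1 A).filter (fun i => π ≤ v i)).card)
    (G : ℝ → ℝ)
    (hG : ∀ π : ℝ, G π = ((N π : ℝ) - β * (φ (N π) : ℝ)) * π / L)
    (πstar : ℝ) (hπstar : 0 ≤ πstar)
    (hmax : ∀ π : ℝ, 0 ≤ π → G π ≤ G πstar)
    (hN1 : 1 ≤ N πstar) :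
    πstar = v (N πstar) := by
  have hnM : N πstar ≤ M := (hN πstar).le.trans (min_le_left _ _)
  have hnC : N πstar ≤ ((Finset.Icc 1 A).filter (fun i => πstar ≤ v i)).card :=
    (hN πstar).le.trans (min_le_right _ _)
  have hnA : N πstar ≤ A := by
    simpa using hnC.trans (Finset.card_filter_le _ _)
  have hle : πstar ≤ v (N πstar) := by
    by_contra! hlt
    -- If `v n < π*`, only the bids `1, …, n - 1` can be at or above `π*`.
    have hsub : (Finset.Icc 1 A).filter (fun i => πstar ≤ v i) ⊆
        Finset.Icc 1 (N πstar - 1) := by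
      intro i hi
      simp only [Finset.mem_filter, Finset.mem_Icc] at hi ⊢
      refine ⟨hi.1.1, ?_⟩
      by_contra! h
      have := hmono (N πstar) i hN1 (by omega) hi.1.2
      linarith [hi.2]
    have := Finset.card_le_card hsub
    rw [Nat.card_Icc] at this
    omega
  have hsame : N (v (N πstar)) = N πstar := by
    apply le_antisymm
    · rw [hN (v (N πstar)), hN πstar]
      refine min_le_min_left _ (Finset.card_le_card ?_)
      rw [← hN πstar]
      exact Finset.monotone_filter_right _ fun i _ hi => hle.trans hi
    · rw [hN (v (N πstar))]
      refine le_min hnM ?_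
      have hsub : Finset.Icc 1 (N πstar) ⊆
          (Finset.Icc 1 A).filter (fun i => v (N πstar) ≤ v i) := by
        intro i hi
        simp only [Finset.mem_filter, Finset.mem_Icc] at hi ⊢
        exact ⟨⟨hi.1, hi.2.trans hnA⟩, hmono i _ hi.1 hi.2 hnA⟩
      simpa using Finset.card_le_card hsub
  have hcoef : 0 < (N πstar : ℝ) - β * (φ (N πstar) : ℝ) := by
    have h1 : (φ (N πstar) : ℝ) ≤ N πstar := by exact_mod_cast hφ _
    have h2 : (1 : ℝ) ≤ N πstar := by exact_mod_cast hN1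
    nlinarith
  have hrev := hmax _ (hnonneg _ hN1 hnA)
  rw [hG, hG πstar, hsame, div_le_div_iff_of_pos_right hL] at hrev
  exact le_antisymm hle (le_of_mul_le_mul_left hrev hcoef)
end

section
/- Truthful bidding is weakly dominant: for every bid price v ≥ 0, every acceptance decision a_v consistent with v, and every acceptance decision a_c consistent with the truthful bid c, the payoff the user obtains by bidding its willingness-to-pay c (under decision a_c) is at least the payoff it obtains by bidding v (under decision a_v). -/
/-- Truthful bidding is weakly dominant: for any bid price `v ≥ 0`, any
acceptance decision `av` consistent with `v` and any acceptance decision `ac`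
consistent with the truthful bid `c`, the payoff from bidding the
willingness-to-pay `c` is at least the payoff from bidding `v`. -/
theorem truthful_bidding_weakly_dominant
    (c π ς L : ℝ) (hc : 0 ≤ c) (hπ : 0 ≤ π) (hς : 0 ≤ ς) (hL : 0 < L)
    (payoff : Bool → ℝ)
    (hpayoff : ∀ a : Bool, payoff a = if a then (c - π) * ς / L else 0)
    (v : ℝ) (hv : 0 ≤ v)
    (av ac : Bool)
    (hav : (π < v → av = true) ∧ (v < π → av = false))
    (hac : (π < c → ac = true) ∧ (c < π → ac = false)) :
    payoff av ≤ payoff ac := by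
  -- The truthful decision is optimal: it accepts when `c - π > 0` and rejects when `c - π < 0`,
  -- while at `c = π` both decisions pay zero.
  have hk : 0 ≤ ς / L := div_nonneg hς hL.le
  rw [hpayoff, hpayoff, mul_div_assoc]
  rcases lt_trichotomy π c with h | h | h
  · have := mul_nonneg (sub_nonneg.2 h.le) hk
    rw [hac.1 h]
    cases av <;> simp [this]
  · simp [h]
  · have := mul_nonpos_of_nonpos_of_nonneg (sub_nonpos.2 h.le) hk
    rw [hac.2 h]
    cases av <;> simp [this]
end

section
/- Proposition 5.1, case (i): if ρ ≤ min(1/2, 1 − D/2), then π̄/2 lies in the feasible interval [π″, π̄], the revenue there is g(π̄/2) = (π̄/(4K))·(A/(1 − ρ)), and g(π̄/2) ≥ g(π) for every π ∈ [π″, π̄]; i.e., the optimal spot price is π* = π̄/2 and the maximum spot revenue is (π̄/(4K))·A/(1 − ρ). -/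
/-!
Up to a positive factor, `g` is the concave parabola `π ↦ π * (πhi - π)`, whose vertex `πhi / 2`
is its maximizer on the whole line. The hypothesis on `ρ` serves only to make the vertex feasible:
`ρ ≤ 1 / 2` says `πlo ≤ πhi / 2`, and `ρ ≤ 1 - D / 2` says `π' ≤ πhi / 2`.
-/

/-- Proposition 5.1, case (i): if `ρ ≤ min (1/2) (1 - D/2)` then `π̄/2` is
feasible, `g (π̄/2) = (π̄/(4K)) * (A/(1-ρ))`, and `π̄/2` maximizes `g` over the
feasible interval `[π'', π̄]`. -/
theorem spot_optimal_price_case_one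
    (πlo πhi A M K : ℝ)
    (hπlo : 0 < πlo) (hlt : πlo < πhi) (hA : 0 < A) (hM : 0 < M) (hK : 0 < K)
    (ρ D : ℝ) (hρ : ρ = πlo / πhi) (hD : D = A / M)
    (g : ℝ → ℝ)
    (hg : ∀ π : ℝ, g π = A / (K * (πhi - πlo)) * (πhi * π - π ^ 2))
    (π' π'' : ℝ)
    (hπ' : π' = πhi - (M / A) * (πhi - πlo))
    (hπ'' : π'' = max π' πlo)
    (hcase : ρ ≤ min (1 / 2) (1 - D / 2)) :
    πhi / 2 ∈ Set.Icc π'' πhi ∧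
    g (πhi / 2) = πhi / (4 * K) * (A / (1 - ρ)) ∧
    ∀ π ∈ Set.Icc π'' πhi, g π ≤ g (πhi / 2) := by
  have hhi : 0 < πhi := hπlo.trans hlt
  have hgap : 0 < πhi - πlo := sub_pos.mpr hlt
  obtain ⟨h1, h2⟩ := le_min_iff.mp hcase
  have hlo : πlo ≤ πhi / 2 := by
    rw [hρ, div_le_iff₀ hhi] at h1
    linarith
  have hgapρ : πhi - πlo = πhi * (1 - ρ) := by
    rw [hρ]
    field_simp
  -- The bound `D / 2 ≤ 1 - ρ`, scaled by `(M / A) * πhi`, is exactly `π' ≤ πhi / 2`.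
  have hcap : π' ≤ πhi / 2 := by
    have hMD : M / A * D = 1 := by
      rw [hD]
      field_simp
    have hscaled : 0 ≤ M / A * πhi * (1 - ρ - D / 2) :=
      mul_nonneg (by positivity) (by linarith)
    rw [hπ', hgapρ]
    linear_combination hscaled - πhi / 2 * hMD
  refine ⟨⟨hπ'' ▸ max_le hcap hlo, by linarith⟩, ?_, fun π _ => ?_⟩
  · have hρne : 1 - ρ ≠ 0 := by linarith
    rw [hg, hgapρ]
    field_simp
    ring
  · rw [hg, hg]
    -- Completing the square: `πhi * π - π ^ 2 = πhi ^ 2 / 4 - (π - πhi / 2) ^ 2`.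
    exact mul_le_mul_of_nonneg_left (by linarith [sq_nonneg (π - πhi / 2)]) (by positivity)
end

section
/- Proposition 5.1, case (ii): if D ≤ 1 and ρ > 1/2, then π̲ lies in the feasible interval [π″, π̄], the revenue there is g(π̲) = A·π̲/K, and g(π̲) ≥ g(π) for every π ∈ [π″, π̄]; i.e., the optimal spot price is π* = π̲ and the maximum spot revenue is A·π̲/K. -/
/-!
The parabola `π ↦ πhi * π - π ^ 2` peaks at `πhi / 2`, and `1 / 2 < ρ` puts `πlo` to the right of
this peak, so the revenue decreases on `[πlo, πhi]`. Since `D ≤ 1`, the feasible interval is all of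
`[πlo, πhi]`, and the maximum is attained at its left endpoint.
-/

/-- Proposition 5.1, case (ii): if `D ≤ 1` and `ρ > 1/2` then `π̲` is feasible,
`g π̲ = A·π̲/K`, and `π̲` maximizes `g` over the feasible interval `[π'', π̄]`. -/
theorem spot_optimal_price_case_two
    (πlo πhi A M K : ℝ)
    (hπlo : 0 < πlo) (hlt : πlo < πhi) (hA : 0 < A) (hM : 0 < M) (hK : 0 < K)
    (ρ D : ℝ) (hρ : ρ = πlo / πhi) (hD : D = A / M)
    (g : ℝ → ℝ)
    (hg : ∀ π : ℝ, g π = A / (K * (πhi - πlo)) * (πhi * π - π ^ 2))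
    (π' π'' : ℝ)
    (hπ' : π' = πhi - (M / A) * (πhi - πlo))
    (hπ'' : π'' = max π' πlo)
    (hD1 : D ≤ 1) (hρhalf : 1 / 2 < ρ) :
    πlo ∈ Set.Icc π'' πhi ∧
    g πlo = A * πlo / K ∧
    ∀ π ∈ Set.Icc π'' πhi, g π ≤ g πlo := by
  have hhi : 0 < πhi := hπlo.trans hlt
  have hgap : 0 < πhi - πlo := sub_pos.2 hlt
  have hmid : πhi < 2 * πlo := by
    rw [hρ, lt_div_iff₀ hhi] at hρhalf
    linarith
  have hcap : 1 ≤ M / A := by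
    rw [hD, div_le_one hM] at hD1
    exact (one_le_div hA).2 hD1
  -- With `D ≤ 1` the capacity bound `π'` is not binding.
  have hfeas : π'' = πlo := by
    rw [hπ'', max_eq_right]
    rw [hπ']
    nlinarith
  rw [hfeas]
  refine ⟨⟨le_rfl, hlt.le⟩, ?_, ?_⟩
  · rw [hg]
    field_simp
  · rintro π ⟨hπ, -⟩
    rw [hg, hg]
    refine mul_le_mul_of_nonneg_left ?_ (by positivity)
    -- The difference of the two sides is `(π - πlo) * (π + πlo - πhi)`.
    nlinarith [mul_nonneg (sub_nonneg.2 hπ) (show 0 ≤ π + πlo - πhi by linarith)]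
end

section
/- Proposition 5.1, case (iii): if D > 1 and ρ > 1 − D/2, then π′ lies in the feasible interval [π″, π̄], the revenue there is g(π′) = (π̄/K)·(1 − (1 − ρ)/D)·M, and g(π′) ≥ g(π) for every π ∈ [π″, π̄]; i.e., the optimal spot price is π* = π′ and the maximum spot revenue is (π̄/K)·(1 − (1 − ρ)/D)·M. -/
/-!
The revenue is `c * π * (πhi - π)` with `c > 0`, a concave parabola with vertex `πhi / 2`.
The condition `D > 1` gives `πlo < π'`, so the feasible interval is `[π', πhi]`, and
`ρ > 1 - D / 2` is exactly `πhi / 2 < π'`. Hence the revenue decreases on the feasible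
interval and its maximum is at the left endpoint `π'`.
-/

/-- Proposition 5.1, case (iii): if `D > 1` and `ρ > 1 - D/2` then `π'` is
feasible, `g π' = (π̄/K)·(1 - (1-ρ)/D)·M`, and `π'` maximizes `g` over the
feasible interval `[π'', π̄]`. -/
theorem spot_optimal_price_case_three
    (πlo πhi A M K : ℝ)
    (hπlo : 0 < πlo) (hlt : πlo < πhi) (hA : 0 < A) (hM : 0 < M) (hK : 0 < K)
    (ρ D : ℝ) (hρ : ρ = πlo / πhi) (hD : D = A / M)
    (g : ℝ → ℝ)
    (hg : ∀ π : ℝ, g π = A / (K * (πhi - πlo)) * (πhi * π - π ^ 2))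
    (π' π'' : ℝ)
    (hπ' : π' = πhi - (M / A) * (πhi - πlo))
    (hπ'' : π'' = max π' πlo)
    (hD1 : 1 < D) (hρD : 1 - D / 2 < ρ) :
    π' ∈ Set.Icc π'' πhi ∧
    g π' = πhi / K * (1 - (1 - ρ) / D) * M ∧
    ∀ π ∈ Set.Icc π'' πhi, g π ≤ g π' := by
  have hhi : 0 < πhi := hπlo.trans hlt
  have hd : 0 < πhi - πlo := sub_pos.mpr hlt
  have hMA : M < A := by
    rwa [hD, one_lt_div hM] at hD1
  have hlo : πlo < π' := by
    have h1 : M / A < 1 := (div_lt_one hA).mpr hMA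
    rw [hπ']
    nlinarith
  have hle : π' ≤ πhi := by
    have h2 : 0 < M / A * (πhi - πlo) := by positivity
    linarith
  have heq : π'' = π' := by rw [hπ'', max_eq_left hlo.le]
  -- The vertex of the parabola lies to the left of `π'`.
  have hhalf : πhi / 2 < π' := by
    have hDpos : 0 < D := zero_lt_one.trans hD1
    have h3 : (1 - ρ) / D < 1 / 2 := by
      rw [div_lt_iff₀ hDpos]
      linarith
    have h4 : π' = πhi * (1 - (1 - ρ) / D) := by
      rw [hπ', hρ, hD]
      field_simp
    rw [h4]
    nlinarith
  refine ⟨⟨heq.le, hle⟩, ?_, ?_⟩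
  · rw [hg, hπ', hρ, hD]
    field_simp
    ring
  · rintro π ⟨hπ, -⟩
    rw [heq] at hπ
    rw [hg, hg]
    refine mul_le_mul_of_nonneg_left ?_ (by positivity)
    -- The difference of the two sides is `(π - π') * (π + π' - πhi)`.
    nlinarith [mul_nonneg (sub_nonneg.mpr hπ)
      (show 0 ≤ π + π' - πhi by linarith)]
end

section
/- Corollary 5.2, case (i): if ρ ≤ min(1/2, 1 − D/2), then the maximum of g over the feasible interval [π″, π̄], divided by the on-demand revenue G°, equals (1/4)·(1/(1 − ρ))·D·I; i.e., the revenue improvement brought by the spot market is α = (1/4)·D·I/(1 − ρ), attained at spot price π̄/2. -/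
/-! The parabola `π ↦ π̄ π - π²` has its vertex at `π̄ / 2`, so that price is optimal as soon as
it is feasible. Feasibility is exactly the case hypothesis: `ρ ≤ 1 / 2` says `π̲ ≤ π̄ / 2`, and
`ρ ≤ 1 - D / 2` says `π̄ / 2 ≤ (M / A) (π̄ - π̲)`, i.e. `π' ≤ π̄ / 2`. The value of the ratio is
then a direct computation from `1 - ρ = (π̄ - π̲) / π̄`. -/

/-- Corollary 5.2, case (i): if `ρ ≤ min (1/2) (1 - D/2)` then the maximum of
`g` over the feasible interval `[π'', π̄]` is attained at `π̄/2`, and the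
revenue improvement (that maximum divided by the on-demand revenue `G°`) is
`(1/4)·(1/(1-ρ))·D·I`. -/
theorem spot_revenue_improvement_case_one
    (πlo πhi A M K b Mbar : ℝ)
    (hπlo : 0 < πlo) (hlt : πlo < πhi) (hA : 0 < A) (hM : 0 < M) (hK : 0 < K)
    (hb : 0 < b) (hMbar : 0 < Mbar)
    (ρ D I : ℝ) (hρ : ρ = πlo / πhi) (hD : D = A / M) (hI : I = M / (Mbar / b))
    (g : ℝ → ℝ)
    (hg : ∀ π : ℝ, g π = A / (K * (πhi - πlo)) * (πhi * π - π ^ 2))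
    (π' π'' : ℝ)
    (hπ' : π' = πhi - (M / A) * (πhi - πlo))
    (hπ'' : π'' = max π' πlo)
    (Go : ℝ) (hGo : Go = πhi * Mbar / (b * K))
    (hcase : ρ ≤ min (1 / 2) (1 - D / 2)) :
    πhi / 2 ∈ Set.Icc π'' πhi ∧
    (∀ π ∈ Set.Icc π'' πhi, g π ≤ g (πhi / 2)) ∧
    g (πhi / 2) / Go = 1 / 4 * (1 / (1 - ρ)) * D * I := by
  have hhi : 0 < πhi := hπlo.trans hlt
  have hd : 0 < πhi - πlo := sub_pos.mpr hlt
  obtain ⟨h1, h2⟩ := le_min_iff.mp hcase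
  subst hρ hD hI hπ' hπ'' hGo
  refine ⟨⟨max_le ?_ ?_, by linarith⟩, fun π _ => ?_, ?_⟩
  · have h3 : A / M ≤ 2 * (πhi - πlo) / πhi := by
      have : 2 * (πhi - πlo) / πhi = 2 * (1 - πlo / πhi) := by field_simp
      linarith
    rw [div_le_div_iff₀ hM hhi] at h3
    have h4 : πhi / 2 ≤ M / A * (πhi - πlo) := by
      rw [div_mul_eq_mul_div, div_le_div_iff₀ two_pos hA]
      linarith
    linarith
  · rw [div_le_div_iff₀ hhi two_pos] at h1
    linarith
  · rw [hg, hg]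
    refine mul_le_mul_of_nonneg_left ?_ (by positivity)
    nlinarith [sq_nonneg (π - πhi / 2)]
  · have hr : 1 - πlo / πhi = (πhi - πlo) / πhi := by field_simp
    have hd' := hd.ne'
    rw [hg, hr]
    field_simp
    ring
end

section
/- Corollary 5.2, case (ii): if D ≤ 1 and ρ > 1/2, then the maximum of g over the feasible interval [π″, π̄], divided by the on-demand revenue G°, equals ρ·D·I; i.e., the revenue improvement brought by the spot market is α = ρ·D·I, attained at spot price π̲. -/
/-! For `D ≤ 1` capacity does not bind: `π' ≤ π̲`, so the feasible interval is `[π̲, π̄]`.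
Up to a positive factor `g π - g π̲` is `(π - π̲) * (π̄ - π - π̲)`, and `ρ > 1/2` means `π̄ < 2 π̲`,
so the second factor is negative for every `π ≥ π̲`. Hence the maximum is `g π̲ = A π̲ / K`, and
dividing by `G°` gives `ρ D I`. -/


/-- Corollary 5.2, case (ii): if `D ≤ 1` and `ρ > 1/2` then the maximum of `g`
over the feasible interval `[π'', π̄]` is attained at `π̲`, and the revenue
improvement (that maximum divided by the on-demand revenue `G°`) is `ρ·D·I`. -/
theorem spot_revenue_improvement_case_two
    (πlo πhi A M K b Mbar : ℝ)
    (hπlo : 0 < πlo) (hlt : πlo < πhi) (hA : 0 < A) (hM : 0 < M) (hK : 0 < K)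
    (hb : 0 < b) (hMbar : 0 < Mbar)
    (ρ D I : ℝ) (hρ : ρ = πlo / πhi) (hD : D = A / M) (hI : I = M / (Mbar / b))
    (g : ℝ → ℝ)
    (hg : ∀ π : ℝ, g π = A / (K * (πhi - πlo)) * (πhi * π - π ^ 2))
    (π' π'' : ℝ)
    (hπ' : π' = πhi - (M / A) * (πhi - πlo))
    (hπ'' : π'' = max π' πlo)
    (Go : ℝ) (hGo : Go = πhi * Mbar / (b * K))
    (hD1 : D ≤ 1) (hρhalf : 1 / 2 < ρ) :
    πlo ∈ Set.Icc π'' πhi ∧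
    (∀ π ∈ Set.Icc π'' πhi, g π ≤ g πlo) ∧
    g πlo / Go = ρ * D * I := by
  have hhi : 0 < πhi := hπlo.trans hlt
  have hd : 0 < πhi - πlo := sub_pos.2 hlt
  have hAM : A ≤ M := by rwa [hD, div_le_one hM] at hD1
  have hhalf : πhi < 2 * πlo := by
    rw [hρ, lt_div_iff₀ hhi] at hρhalf
    linarith
  have hcap : π' ≤ πlo := by
    have h1 : 1 ≤ M / A := (one_le_div hA).2 hAM
    rw [hπ']
    nlinarith
  have hmax : π'' = πlo := by rw [hπ'', max_eq_right hcap]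
  rw [hmax]
  refine ⟨⟨le_rfl, hlt.le⟩, ?_, ?_⟩
  · rintro π ⟨hπ, -⟩
    rw [hg, hg]
    refine mul_le_mul_of_nonneg_left ?_ (by positivity)
    nlinarith [mul_nonneg (sub_nonneg.2 hπ) (show 0 ≤ π + πlo - πhi by linarith)]
  · have hval : g πlo = A * πlo / K := by
      rw [hg]
      field_simp
    rw [hval, hGo, hρ, hD, hI]
    field_simp
end

section
/- Corollary 5.2, case (iii): if D > 1 and ρ > 1 − D/2, then the maximum of g over the feasible interval [π″, π̄], divided by the on-demand revenue G°, equals (1 − (1 − ρ)/D)·I; i.e., the revenue improvement brought by the spot market is α = (1 − (1 − ρ)/D)·I, attained at spot price π′. -/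
/-!
The revenue `g` is a positive multiple of `π ↦ π (π̄ - π)`, which decreases to the right of its
vertex `π̄ / 2`. The condition `D > 1` says `π' > π̲`, so `π'' = π'`, and the condition
`ρ > 1 - D / 2` says `π' > π̄ / 2`. Hence `g` is decreasing on the feasible interval and is
maximal at its left endpoint `π'`. There `π̄ - π' = (M / A) (π̄ - π̲)`, so that
`g π' = M π' / K`, and dividing by `G°` gives the stated ratio because
`π' / π̄ = 1 - (1 - ρ) / D`.
-/

/-- Corollary 5.2, case (iii): if `D > 1` and `ρ > 1 - D/2` then the maximum of
`g` over the feasible interval `[π'', π̄]` is attained at `π'`, and the revenue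
improvement (that maximum divided by the on-demand revenue `G°`) is
`(1 - (1-ρ)/D)·I`. -/
theorem spot_revenue_improvement_case_three
    (πlo πhi A M K b Mbar : ℝ)
    (hπlo : 0 < πlo) (hlt : πlo < πhi) (hA : 0 < A) (hM : 0 < M) (hK : 0 < K)
    (hb : 0 < b) (hMbar : 0 < Mbar)
    (ρ D I : ℝ) (hρ : ρ = πlo / πhi) (hD : D = A / M) (hI : I = M / (Mbar / b))
    (g : ℝ → ℝ)
    (hg : ∀ π : ℝ, g π = A / (K * (πhi - πlo)) * (πhi * π - π ^ 2))
    (π' π'' : ℝ)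
    (hπ' : π' = πhi - (M / A) * (πhi - πlo))
    (hπ'' : π'' = max π' πlo)
    (Go : ℝ) (hGo : Go = πhi * Mbar / (b * K))
    (hD1 : 1 < D) (hρD : 1 - D / 2 < ρ) :
    π' ∈ Set.Icc π'' πhi ∧
    (∀ π ∈ Set.Icc π'' πhi, g π ≤ g π') ∧
    g π' / Go = (1 - (1 - ρ) / D) * I := by
  have hhi : 0 < πhi := hπlo.trans hlt
  have hΔ : 0 < πhi - πlo := sub_pos.2 hlt
  have hAM : M < A := by rwa [hD, one_lt_div hM] at hD1
  have hlo : πlo < π' := by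
    have h : M / A * (πhi - πlo) < 1 * (πhi - πlo) :=
      mul_lt_mul_of_pos_right ((div_lt_one hA).2 hAM) hΔ
    linarith
  have hhalf : πhi < 2 * π' := by
    have h1 : πhi - πlo < A / M / 2 * πhi := by
      rw [hρ, hD, lt_div_iff₀ hhi] at hρD
      linarith
    have h2 : M / A * (πhi - πlo) < M / A * (A / M / 2 * πhi) :=
      mul_lt_mul_of_pos_left h1 (div_pos hM hA)
    have h3 : M / A * (A / M / 2 * πhi) = πhi / 2 := by field_simp
    linarith
  have hle : π' ≤ πhi := by
    have : 0 < M / A * (πhi - πlo) := by positivity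
    linarith
  rw [hπ'', max_eq_left hlo.le]
  refine ⟨⟨le_rfl, hle⟩, fun π hπ => ?_, ?_⟩
  · rw [hg, hg]
    refine mul_le_mul_of_nonneg_left ?_ (by positivity)
    -- The difference of the two sides is `(π - π') (π + π' - π̄)`.
    nlinarith [mul_nonneg (sub_nonneg.2 hπ.1)
      (by linarith [hπ.1] : 0 ≤ π + π' - πhi)]
  · have hval : g π' = M * π' / K := by
      have h : πhi * π' - π' ^ 2 = π' * (M / A * (πhi - πlo)) := by
        rw [show M / A * (πhi - πlo) = πhi - π' by linarith]
        ring
      rw [hg, h]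
      field_simp
    rw [hval, hGo, hI, hρ, hD, hπ']
    field_simp
end
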